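/- Theorem 2 (lower bound on the descent): along the VISTA iterates, for every k ≥ 1, Δ_k ≥ (λ1/2)·Σ_{t=1}^T (‖A_t^{(k)} − A_t^{(k+1)}‖_F² + ‖B_t^{(k)} − B_t^{(k+1)}‖_F²) + (1/2)·Σ_{t=1}^T (1 + λ2(1{t>1} + 1{t<T}) + λ3)·(‖(A_t^{(k)} − A_t^{(k+1)})(B_t^{(k)})ᵀ‖_F² + ‖A_t^{(k+1)}(B_t^{(k)} − B_t^{(k+1)})ᵀ‖_F²). -/

import Mathlib

/-!
Each surrogate is a quadratic function of the factor being updated, composed with a linear map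
`L` (namely `A ↦ A Bᵀ` or `B ↦ A Bᵀ`). Around a global minimizer the first-order term of a quadratic
vanishes, so its value exceeds the minimum by exactly its second-order part, which is the
per-block quantity in the bound (`surrogate_descent`).

The filled-in data term splits as `‖P_Ω(X - M)‖² + ‖P_{Ω^⊥}(M_old - M)‖²`, so the surrogate agrees
with the objective at the old factor and dominates it at the new one (`frobSq_fill_old`,
`frobSq_proj_le_fill`). In the smoothness terms the block at time `t` sees the new value at `t - 1`
and the old value at `t + 1`, so the differences telescope when summed over `t` (`coupling_sum`).
Hence one sweep decreases the objective by at least the sum of the block decreases (`sweep`).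
The theorem adds the sweep over the `A_t` and the sweep over the `B_t`.
-/

open Matrix BigOperators Finset Filter Topology

/-- Squared Frobenius norm of a real matrix. -/
noncomputable def frobSq {a b : ℕ} (M : Matrix (Fin a) (Fin b) ℝ) : ℝ :=
  ∑ i, ∑ j, (M i j) ^ 2

/-- Projection onto the observed entries `Ω`. -/
noncomputable def proj {a b : ℕ} (Ω : Finset (Fin a × Fin b))
    (M : Matrix (Fin a) (Fin b) ℝ) : Matrix (Fin a) (Fin b) ℝ :=
  fun i j => if (i, j) ∈ Ω then M i j else 0

/-- Projection onto the complement of `Ω`. -/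
noncomputable def projPerp {a b : ℕ} (Ω : Finset (Fin a × Fin b))
    (M : Matrix (Fin a) (Fin b) ℝ) : Matrix (Fin a) (Fin b) ℝ :=
  M - proj Ω M
/-- The VISTA objective `F(A_{1:T}, B_{1:T})`; time indices run over `t = 1,…,T`. -/
noncomputable def objF {m n r : ℕ} (T : ℕ) (l1 l2 l3 : ℝ)
    (Ωs : ℕ → Finset (Fin m × Fin n))
    (Xs Ys : ℕ → Matrix (Fin m) (Fin n) ℝ)
    (A : ℕ → Matrix (Fin m) (Fin r) ℝ)
    (B : ℕ → Matrix (Fin n) (Fin r) ℝ) : ℝ :=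
  (1 / 2) * ∑ t ∈ Finset.Icc 1 T, frobSq (proj (Ωs t) (Xs t - A t * (B t)ᵀ))
    + (l1 / 2) * ∑ t ∈ Finset.Icc 1 T, (frobSq (A t) + frobSq (B t))
    + (l2 / 2) * ∑ t ∈ Finset.Icc 2 T,
        frobSq (A t * (B t)ᵀ - A (t - 1) * (B (t - 1))ᵀ)
    + (l3 / 2) * ∑ t ∈ Finset.Icc 1 T, frobSq (Ys t - A t * (B t)ᵀ)
/-- The surrogate `Q̃_{A,t}(A)`.  Here `Akt, Bkt` are the current factors at time `t`
(used to form the filled-in matrix `X_t^{(k)} = P_{Ω_t}(X_t) + P_{Ω_t^⊥}(A_t^{(k)}(B_t^{(k)})ᵀ)`),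
and `prevM, nextM` are the neighbouring imputations
`A_{t−1}^{(k+1)}(B_{t−1}^{(k)})ᵀ` and `A_{t+1}^{(k)}(B_{t+1}^{(k)})ᵀ`. -/
noncomputable def QtilA {m n r : ℕ} (T : ℕ) (l1 l2 l3 : ℝ)
    (Ωt : Finset (Fin m × Fin n)) (Xt Yt : Matrix (Fin m) (Fin n) ℝ)
    (Akt : Matrix (Fin m) (Fin r) ℝ) (Bkt : Matrix (Fin n) (Fin r) ℝ)
    (prevM nextM : Matrix (Fin m) (Fin n) ℝ) (t : ℕ)
    (A : Matrix (Fin m) (Fin r) ℝ) : ℝ :=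
  (1 / 2) * frobSq (proj Ωt Xt + projPerp Ωt (Akt * Bktᵀ) - A * Bktᵀ)
    + (l1 / 2) * frobSq A
    + (l3 / 2) * frobSq (Yt - A * Bktᵀ)
    + (l2 / 2) * (if 1 < t then frobSq (A * Bktᵀ - prevM) else 0)
    + (l2 / 2) * (if t < T then frobSq (nextM - A * Bktᵀ) else 0)
/-- The surrogate `Q̃_{B,t}(B)`.  Here `At` is the already-updated `A_t^{(k+1)}`, `Bkt` the
current `B_t^{(k)}` (used to form `X_t^{(k+1/2)} = P_{Ω_t}(X_t) + P_{Ω_t^⊥}(A_t^{(k+1)}(B_t^{(k)})ᵀ)`),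
and `prevM, nextM` are `A_{t−1}^{(k+1)}(B_{t−1}^{(k+1)})ᵀ` and `A_{t+1}^{(k+1)}(B_{t+1}^{(k)})ᵀ`. -/
noncomputable def QtilB {m n r : ℕ} (T : ℕ) (l1 l2 l3 : ℝ)
    (Ωt : Finset (Fin m × Fin n)) (Xt Yt : Matrix (Fin m) (Fin n) ℝ)
    (At : Matrix (Fin m) (Fin r) ℝ) (Bkt : Matrix (Fin n) (Fin r) ℝ)
    (prevM nextM : Matrix (Fin m) (Fin n) ℝ) (t : ℕ)
    (B : Matrix (Fin n) (Fin r) ℝ) : ℝ :=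
  (1 / 2) * frobSq (proj Ωt Xt + projPerp Ωt (At * Bktᵀ) - At * Bᵀ)
    + (l1 / 2) * frobSq B
    + (l3 / 2) * frobSq (Yt - At * Bᵀ)
    + (l2 / 2) * (if 1 < t then frobSq (At * Bᵀ - prevM) else 0)
    + (l2 / 2) * (if t < T then frobSq (nextM - At * Bᵀ) else 0)

/-- A quadratic expansion of the squared Frobenius norm along a line. -/
lemma frobSq_line {a b : ℕ} (U V : Matrix (Fin a) (Fin b) ℝ) :
    ∃ c : ℝ, ∀ s : ℝ, frobSq (U + s • V) = frobSq U + s * c + s ^ 2 * frobSq V := by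
  refine ⟨∑ i, ∑ j, 2 * (U i j * V i j), fun s => ?_⟩
  simp only [frobSq, Finset.mul_sum, ← Finset.sum_add_distrib]
  refine Finset.sum_congr rfl fun i _ => Finset.sum_congr rfl fun j _ => ?_
  simp only [Matrix.add_apply, Matrix.smul_apply, smul_eq_mul]
  ring

lemma frobSq_neg {a b : ℕ} (U : Matrix (Fin a) (Fin b) ℝ) : frobSq (-U) = frobSq U := by
  simp [frobSq]

lemma frobSq_sub_comm {a b : ℕ} (U V : Matrix (Fin a) (Fin b) ℝ) :
    frobSq (U - V) = frobSq (V - U) := by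
  rw [← frobSq_neg, neg_sub]

lemma frobSq_fill_old {a b : ℕ} (Ω : Finset (Fin a × Fin b)) (X M : Matrix (Fin a) (Fin b) ℝ) :
    frobSq (proj Ω X + projPerp Ω M - M) = frobSq (proj Ω (X - M)) := by
  refine Finset.sum_congr rfl fun i _ => Finset.sum_congr rfl fun j _ => ?_
  simp only [proj, projPerp, Matrix.add_apply, Matrix.sub_apply]
  split_ifs <;> ring

lemma frobSq_proj_le_fill {a b : ℕ} (Ω : Finset (Fin a × Fin b))
    (X M N : Matrix (Fin a) (Fin b) ℝ) :
    frobSq (proj Ω (X - N)) ≤ frobSq (proj Ω X + projPerp Ω M - N) := by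
  refine Finset.sum_le_sum fun i _ => Finset.sum_le_sum fun j _ => ?_
  simp only [proj, projPerp, Matrix.add_apply, Matrix.sub_apply]
  split_ifs
  · apply le_of_eq; ring
  · nlinarith [sq_nonneg (M i j - N i j)]

/-- The common form of the two surrogates: the factor `P` enters through a linear map `L`, and `Z`
is the filled-in data matrix. -/
noncomputable def surrogate {a b m n : ℕ} (T : ℕ) (l1 l2 l3 : ℝ)
    (L : Matrix (Fin a) (Fin b) ℝ →ₗ[ℝ] Matrix (Fin m) (Fin n) ℝ)
    (Z Y prevM nextM : Matrix (Fin m) (Fin n) ℝ) (t : ℕ) (P : Matrix (Fin a) (Fin b) ℝ) : ℝ :=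
  (1 / 2) * frobSq (Z - L P)
    + (l1 / 2) * frobSq P
    + (l3 / 2) * frobSq (Y - L P)
    + (l2 / 2) * (if 1 < t then frobSq (L P - prevM) else 0)
    + (l2 / 2) * (if t < T then frobSq (nextM - L P) else 0)

/-- The first-order condition at a minimizer, for a quadratic in one real variable `s` minimized
at `s = 0`. -/
lemma linear_coeff_nonneg {c d : ℝ} (h : ∀ s : ℝ, 0 ≤ s * c + s ^ 2 * d) : 0 ≤ c := by
  by_contra hc
  push Not at hc
  -- At `s = -c / (|d| + 1)` the linear term dominates.
  have hd : 0 < |d| + 1 := by positivity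
  have hs := h (-c / (|d| + 1))
  have e : -c / (|d| + 1) * c + (-c / (|d| + 1)) ^ 2 * d
      = -(c ^ 2 * ((|d| + 1) - d)) / (|d| + 1) ^ 2 := by
    field_simp
    ring
  rw [e] at hs
  have hpos : 0 < c ^ 2 * ((|d| + 1) - d) := by
    have := le_abs_self d
    have := pow_pos (neg_pos.mpr hc) 2
    apply mul_pos
    · nlinarith
    · linarith
  have := div_neg_of_neg_of_pos (neg_neg_of_pos hpos) (pow_pos hd 2)
  linarith

/-- The surrogate exceeds its minimum by at least its second-order part. -/
lemma surrogate_descent {a b m n : ℕ} (T : ℕ) (l1 l2 l3 : ℝ)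
    (L : Matrix (Fin a) (Fin b) ℝ →ₗ[ℝ] Matrix (Fin m) (Fin n) ℝ)
    (Z Y prevM nextM : Matrix (Fin m) (Fin n) ℝ) (t : ℕ) (Q : Matrix (Fin a) (Fin b) ℝ)
    (hmin : ∀ P, surrogate T l1 l2 l3 L Z Y prevM nextM t Q
      ≤ surrogate T l1 l2 l3 L Z Y prevM nextM t P) (P : Matrix (Fin a) (Fin b) ℝ) :
    (l1 / 2) * frobSq (P - Q)
      + (1 / 2) * ((1 + l2 * ((if 1 < t then (1 : ℝ) else 0) + (if t < T then (1 : ℝ) else 0)) + l3)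
        * frobSq (L (P - Q)))
      ≤ surrogate T l1 l2 l3 L Z Y prevM nextM t P
        - surrogate T l1 l2 l3 L Z Y prevM nextM t Q := by
  set D := P - Q with hD
  obtain ⟨c0, h0⟩ := frobSq_line (L Q - Z) (L D)
  obtain ⟨c1, h1⟩ := frobSq_line Q D
  obtain ⟨c2, h2⟩ := frobSq_line (L Q - Y) (L D)
  obtain ⟨c3, h3⟩ := frobSq_line (L Q - prevM) (L D)
  obtain ⟨c4, h4⟩ := frobSq_line (L Q - nextM) (L D)
  have shift : ∀ (s : ℝ) (W : Matrix (Fin m) (Fin n) ℝ),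
      L (Q + s • D) - W = L Q - W + s • L D := by
    intro s W
    rw [map_add, map_smul]
    abel
  -- The exact second-order expansion of the surrogate along the line through `Q` and `P`.
  have key : ∃ c : ℝ, ∀ s : ℝ, surrogate T l1 l2 l3 L Z Y prevM nextM t (Q + s • D)
      = surrogate T l1 l2 l3 L Z Y prevM nextM t Q + (s * c + s ^ 2 * ((l1 / 2) * frobSq D
      + (1 / 2) * ((1 + l2 * ((if 1 < t then (1 : ℝ) else 0) + (if t < T then (1 : ℝ) else 0)) + l3)
        * frobSq (L D)))) := by
    refine ⟨(1 / 2) * c0 + (l1 / 2) * c1 + (l3 / 2) * c2 + (l2 / 2) * (if 1 < t then c3 else 0)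
      + (l2 / 2) * (if t < T then c4 else 0), fun s => ?_⟩
    simp only [surrogate, frobSq_sub_comm Z, frobSq_sub_comm Y, frobSq_sub_comm nextM, shift,
      h0, h1, h2, h3, h4]
    split_ifs <;> ring
  obtain ⟨c, hc⟩ := key
  have hc0 : 0 ≤ c := linear_coeff_nonneg fun s => by
    have := hmin (Q + s • D)
    rw [hc s] at this
    exact (le_add_iff_nonneg_right _).mp this
  have hP : Q + (1 : ℝ) • D = P := by rw [hD]; simp
  have := hc 1
  rw [hP] at this
  linarith

/-- Summed over `t`, the smoothness decreases seen by the successive blocks telescope to the total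
decrease. -/
lemma coupling_sum {m n : ℕ} (T : ℕ) (M N : ℕ → Matrix (Fin m) (Fin n) ℝ) :
    ∑ t ∈ Finset.Icc 1 T,
      (((if 1 < t then frobSq (M t - N (t - 1)) else 0)
          + (if t < T then frobSq (M (t + 1) - M t) else 0))
        - ((if 1 < t then frobSq (N t - N (t - 1)) else 0)
          + (if t < T then frobSq (M (t + 1) - N t) else 0)))
      = ∑ t ∈ Finset.Icc 2 T, frobSq (M t - M (t - 1))
        - ∑ t ∈ Finset.Icc 2 T, frobSq (N t - N (t - 1)) := by
  have back : ∀ f : ℕ → ℝ, ∑ t ∈ Finset.Icc 1 T, (if 1 < t then f t else 0)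
      = ∑ t ∈ Finset.Icc 2 T, f t := by
    intro f
    rw [← Finset.sum_filter]
    congr 1
    ext t
    simp only [Finset.mem_filter, Finset.mem_Icc]
    omega
  have fwd : ∀ f : ℕ → ℝ, ∑ t ∈ Finset.Icc 1 T, (if t < T then f (t + 1) else 0)
      = ∑ t ∈ Finset.Icc 2 T, f t := by
    intro f
    rw [← Finset.sum_filter]
    refine Finset.sum_bij (fun t _ => t + 1) ?_ ?_ ?_ ?_
    · intro t ht
      simp only [Finset.mem_filter, Finset.mem_Icc] at ht ⊢
      omega
    · intro s _ t _ h
      omega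
    · intro t ht
      simp only [Finset.mem_Icc] at ht
      refine ⟨t - 1, ?_, by omega⟩
      simp only [Finset.mem_filter, Finset.mem_Icc]
      omega
    · intro t _
      rfl
  have e1 := fwd fun t => frobSq (M t - M (t - 1))
  have e2 := fwd fun t => frobSq (M t - N (t - 1))
  simp only [Nat.add_sub_cancel] at e1 e2
  rw [Finset.sum_sub_distrib, Finset.sum_add_distrib, Finset.sum_add_distrib, e1, e2,
    back fun t => frobSq (M t - N (t - 1)), back fun t => frobSq (N t - N (t - 1))]
  ring

/-- The part of the objective that depends on the fitted matrices `M_t = A_t B_tᵀ` only. -/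
noncomputable def fitObj {m n : ℕ} (T : ℕ) (l2 l3 : ℝ) (Ωs : ℕ → Finset (Fin m × Fin n))
    (Xs Ys M : ℕ → Matrix (Fin m) (Fin n) ℝ) : ℝ :=
  (1 / 2) * ∑ t ∈ Finset.Icc 1 T, frobSq (proj (Ωs t) (Xs t - M t))
    + (l2 / 2) * ∑ t ∈ Finset.Icc 2 T, frobSq (M t - M (t - 1))
    + (l3 / 2) * ∑ t ∈ Finset.Icc 1 T, frobSq (Ys t - M t)

/-- The decrease achieved by one Gauss–Seidel sweep `P → P'` over the times `t = 1, …, T`, the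
other factor being held fixed inside the linear maps `L t`. -/
lemma sweep {a b m n : ℕ} (T : ℕ) (l1 l2 l3 : ℝ)
    (Ωs : ℕ → Finset (Fin m × Fin n)) (Xs Ys : ℕ → Matrix (Fin m) (Fin n) ℝ)
    (L : ℕ → Matrix (Fin a) (Fin b) ℝ →ₗ[ℝ] Matrix (Fin m) (Fin n) ℝ)
    (P P' : ℕ → Matrix (Fin a) (Fin b) ℝ)
    (hmin : ∀ t ∈ Finset.Icc 1 T, ∀ R,
      surrogate T l1 l2 l3 (L t) (proj (Ωs t) (Xs t) + projPerp (Ωs t) (L t (P t))) (Ys t)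
          (L (t - 1) (P' (t - 1))) (L (t + 1) (P (t + 1))) t (P' t)
        ≤ surrogate T l1 l2 l3 (L t) (proj (Ωs t) (Xs t) + projPerp (Ωs t) (L t (P t))) (Ys t)
          (L (t - 1) (P' (t - 1))) (L (t + 1) (P (t + 1))) t R) :
    (l1 / 2) * ∑ t ∈ Finset.Icc 1 T, frobSq (P t - P' t)
      + (1 / 2) * ∑ t ∈ Finset.Icc 1 T,
        (1 + l2 * ((if 1 < t then (1 : ℝ) else 0) + (if t < T then (1 : ℝ) else 0)) + l3)
          * frobSq (L t (P t - P' t))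
      ≤ (fitObj T l2 l3 Ωs Xs Ys (fun t => L t (P t)) + (l1 / 2) * ∑ t ∈ Finset.Icc 1 T, frobSq (P t))
        - (fitObj T l2 l3 Ωs Xs Ys (fun t => L t (P' t))
          + (l1 / 2) * ∑ t ∈ Finset.Icc 1 T, frobSq (P' t)) := by
  have hsum := Finset.sum_le_sum fun t ht =>
    surrogate_descent T l1 l2 l3 (L t) _ (Ys t) _ _ t (P' t) (hmin t ht) (P t)
  rw [Finset.sum_add_distrib, ← Finset.mul_sum, ← Finset.mul_sum] at hsum
  refine hsum.trans ?_
  have hc := coupling_sum T (fun t => L t (P t)) (fun t => L t (P' t))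
  have hle : ∀ t ∈ Finset.Icc 1 T,
      surrogate T l1 l2 l3 (L t) (proj (Ωs t) (Xs t) + projPerp (Ωs t) (L t (P t))) (Ys t)
          (L (t - 1) (P' (t - 1))) (L (t + 1) (P (t + 1))) t (P t)
        - surrogate T l1 l2 l3 (L t) (proj (Ωs t) (Xs t) + projPerp (Ωs t) (L t (P t))) (Ys t)
          (L (t - 1) (P' (t - 1))) (L (t + 1) (P (t + 1))) t (P' t)
      ≤ (1 / 2) * (frobSq (proj (Ωs t) (Xs t - L t (P t)))
            - frobSq (proj (Ωs t) (Xs t - L t (P' t))))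
        + (l1 / 2) * (frobSq (P t) - frobSq (P' t))
        + (l3 / 2) * (frobSq (Ys t - L t (P t)) - frobSq (Ys t - L t (P' t)))
        + (l2 / 2) * (((if 1 < t then frobSq (L t (P t) - L (t - 1) (P' (t - 1))) else 0)
          + (if t < T then frobSq (L (t + 1) (P (t + 1)) - L t (P t)) else 0))
        - ((if 1 < t then frobSq (L t (P' t) - L (t - 1) (P' (t - 1))) else 0)
          + (if t < T then frobSq (L (t + 1) (P (t + 1)) - L t (P' t)) else 0))) := by
    intro t _
    have h := frobSq_proj_le_fill (Ωs t) (Xs t) (L t (P t)) (L t (P' t))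
    simp only [surrogate, frobSq_fill_old]
    linarith
  refine (Finset.sum_le_sum hle).trans (le_of_eq ?_)
  simp only [Finset.sum_add_distrib, ← Finset.mul_sum] at hc ⊢
  rw [hc]
  simp only [fitObj, Finset.sum_sub_distrib]
  ring

lemma objF_eq_fitObj {m n r : ℕ} (T : ℕ) (l1 l2 l3 : ℝ) (Ωs : ℕ → Finset (Fin m × Fin n))
    (Xs Ys : ℕ → Matrix (Fin m) (Fin n) ℝ) (A : ℕ → Matrix (Fin m) (Fin r) ℝ)
    (B : ℕ → Matrix (Fin n) (Fin r) ℝ) :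
    objF T l1 l2 l3 Ωs Xs Ys A B = fitObj T l2 l3 Ωs Xs Ys (fun t => A t * (B t)ᵀ)
      + (l1 / 2) * ∑ t ∈ Finset.Icc 1 T, frobSq (A t)
      + (l1 / 2) * ∑ t ∈ Finset.Icc 1 T, frobSq (B t) := by
  simp only [objF, fitObj, Finset.sum_add_distrib]
  ring

/-- The linear map `A ↦ A Bᵀ`. -/
def leftFactor {m n r : ℕ} (B : Matrix (Fin n) (Fin r) ℝ) :
    Matrix (Fin m) (Fin r) ℝ →ₗ[ℝ] Matrix (Fin m) (Fin n) ℝ where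
  toFun A := A * Bᵀ
  map_add' := fun _ _ => Matrix.add_mul _ _ _
  map_smul' := fun _ _ => Matrix.smul_mul _ _ _

/-- The linear map `B ↦ A Bᵀ`. -/
def rightFactor {m n r : ℕ} (A : Matrix (Fin m) (Fin r) ℝ) :
    Matrix (Fin n) (Fin r) ℝ →ₗ[ℝ] Matrix (Fin m) (Fin n) ℝ where
  toFun B := A * Bᵀ
  map_add' := fun _ _ => by rw [Matrix.transpose_add, Matrix.mul_add]
  map_smul' := fun _ _ => by rw [Matrix.transpose_smul, Matrix.mul_smul, RingHom.id_apply]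

/-- Theorem 2, lower bound on the descent: along the VISTA iterates,
`Δ_k ≥ (λ1/2)Σ_t(‖A_t^{(k)}−A_t^{(k+1)}‖² + ‖B_t^{(k)}−B_t^{(k+1)}‖²)
  + (1/2)Σ_t(1+λ2(1{t>1}+1{t<T})+λ3)(‖(A_t^{(k)}−A_t^{(k+1)})(B_t^{(k)})ᵀ‖²
    + ‖A_t^{(k+1)}(B_t^{(k)}−B_t^{(k+1)})ᵀ‖²)`. -/
theorem stmt9 (m n r T : ℕ) (hm : 0 < m) (hn : 0 < n) (hr : 0 < r) (hT : 0 < T)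
    (l1 l2 l3 : ℝ) (hl1 : 0 ≤ l1) (hl2 : 0 ≤ l2) (hl3 : 0 ≤ l3)
    (Ωs : ℕ → Finset (Fin m × Fin n))
    (Xs Ys : ℕ → Matrix (Fin m) (Fin n) ℝ)
    (AA : ℕ → ℕ → Matrix (Fin m) (Fin r) ℝ)
    (BB : ℕ → ℕ → Matrix (Fin n) (Fin r) ℝ)
    (hA : ∀ k, 1 ≤ k → ∀ t ∈ Finset.Icc 1 T, ∀ A : Matrix (Fin m) (Fin r) ℝ,
      QtilA T l1 l2 l3 (Ωs t) (Xs t) (Ys t) (AA k t) (BB k t)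
          (AA (k + 1) (t - 1) * (BB k (t - 1))ᵀ) (AA k (t + 1) * (BB k (t + 1))ᵀ) t
          (AA (k + 1) t)
        ≤ QtilA T l1 l2 l3 (Ωs t) (Xs t) (Ys t) (AA k t) (BB k t)
          (AA (k + 1) (t - 1) * (BB k (t - 1))ᵀ) (AA k (t + 1) * (BB k (t + 1))ᵀ) t A)
    (hB : ∀ k, 1 ≤ k → ∀ t ∈ Finset.Icc 1 T, ∀ B : Matrix (Fin n) (Fin r) ℝ,
      QtilB T l1 l2 l3 (Ωs t) (Xs t) (Ys t) (AA (k + 1) t) (BB k t)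
          (AA (k + 1) (t - 1) * (BB (k + 1) (t - 1))ᵀ)
          (AA (k + 1) (t + 1) * (BB k (t + 1))ᵀ) t (BB (k + 1) t)
        ≤ QtilB T l1 l2 l3 (Ωs t) (Xs t) (Ys t) (AA (k + 1) t) (BB k t)
          (AA (k + 1) (t - 1) * (BB (k + 1) (t - 1))ᵀ)
          (AA (k + 1) (t + 1) * (BB k (t + 1))ᵀ) t B)
    : ∀ k, 1 ≤ k →
      (l1 / 2) * ∑ t ∈ Finset.Icc 1 T,
            (frobSq (AA k t - AA (k + 1) t) + frobSq (BB k t - BB (k + 1) t))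
        + (1 / 2) * ∑ t ∈ Finset.Icc 1 T,
            (1 + l2 * ((if 1 < t then (1 : ℝ) else 0) + (if t < T then (1 : ℝ) else 0)) + l3)
              * (frobSq ((AA k t - AA (k + 1) t) * (BB k t)ᵀ)
                + frobSq (AA (k + 1) t * (BB k t - BB (k + 1) t)ᵀ))
      ≤ objF T l1 l2 l3 Ωs Xs Ys (AA k) (BB k)
        - objF T l1 l2 l3 Ωs Xs Ys (AA (k + 1)) (BB (k + 1)) := by
  intro k hk
  have sA := sweep T l1 l2 l3 Ωs Xs Ys (fun t => leftFactor (BB k t)) (AA k) (AA (k + 1))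
    (hA k hk)
  have sB := sweep T l1 l2 l3 Ωs Xs Ys (fun t => rightFactor (AA (k + 1) t)) (BB k) (BB (k + 1))
    (hB k hk)
  simp only [leftFactor, rightFactor, LinearMap.coe_mk, AddHom.coe_mk] at sA sB
  rw [objF_eq_fitObj, objF_eq_fitObj]
  simp only [mul_add _ (frobSq _) (frobSq _), Finset.sum_add_distrib]
  linarith
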